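/- Let Ω ⊂ ℝ^d be a bounded open domain and let k ∈ C^q(Ω̄ × Ω̄). Let {(Y_h⃗, w_h⃗)} be a stable quadrature scheme (with stability constant C_Q) and let {(X_h⃗, Y_h⃗, R_h⃗)} be a stable reconstruction scheme (with stability constant C_I). Then the family of linear operators K_h⃗ : C^q(Ω̄) → C^q(Ω̄) defined by (K_h⃗ v)(x) = Σ_{i=1}^{|Y_h⃗|} w_{h⃗,i} k(x, y_{h⃗,i}) Σ_{j=1}^{|X_h⃗|} (R_h⃗)_{ij} v(x_{h⃗,j}), indexed over all h⃗ = (h_X, h_Y) with h_X, h_Y > 0, is collectively compact: the set { K_h⃗ v : h⃗ > 0, v ∈ C^q(Ω̄), ‖v‖_{C^q(Ω̄)} ≤ 1 } is relatively compact in C^q(Ω̄). -/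

import Mathlib

/-!
Write `K_h⃗ v = ∑ i, c i * k(·, y i)`. Since `‖v‖_∞ ≤ ‖v‖_{C^q} ≤ 1`, stability of the two schemes
gives `∑ i, |c i| ≤ CQ * CI`, so up to a fixed factor every `K_h⃗ v` lies in the absolutely convex
hull of the kernel sections `k(·, y)`, `y ∈ closure Ω`. These sections form a compact subset of
`C^q(Ω̄)`, and in a complete locally convex space the closed absolutely convex hull of a compact set
is compact; a convergent subsequence can therefore be extracted.

To carry this out, `C^q(Ω̄)` is realised as the space `jets` of families of derivatives inside a
product of copies of `C(closure Ω, ℝ)`. It is a closed subspace (`isClosed_jets`, resting on the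
theorem on uniform limits of derivatives, `limit_lpd`). Derivatives are indexed by lists of
directions rather than multi-indices, which makes inductions on the order immediate; Schwarz's
theorem (`lpd_perm`) translates between the two. Closedness is used twice: to see that `k(·, y)` is
`C^q` up to the boundary also for `y` on the boundary (`exists_kernel_jet`), and to see that the
limit of the subsequence is again the jet of a `C^q` function.
-/

open MeasureTheory Set Filter Topology

noncomputable section

abbrev Euc (d : ℕ) := EuclideanSpace ℝ (Fin d)

/-- First-order partial derivative in coordinate direction `i`. -/
noncomputable def pd {d : ℕ} (i : Fin d) (f : Euc d → ℝ) : Euc d → ℝ :=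
  fun x => fderiv ℝ f x (EuclideanSpace.single i (1 : ℝ))

/-- Multi-index partial derivative `∂^α`. -/
noncomputable def mpd {d : ℕ} (α : Fin d → ℕ) (f : Euc d → ℝ) : Euc d → ℝ :=
  ((List.finRange d).foldr (fun i g => (pd i)^[α i] ∘ g) id) f

/-- Membership in `C^q(Ω̄)`: `f` is `C^q` on `Ω`, continuous up to the boundary, and all
partial derivatives of order at most `q` extend continuously to `closure Ω`. -/
def MemCq {d : ℕ} (Ω : Set (Euc d)) (q : ℕ) (f : Euc d → ℝ) : Prop :=
  ContDiffOn ℝ (q : ℕ∞) f Ω ∧ ContinuousOn f (closure Ω) ∧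
  ∀ α : Fin d → ℕ, (∑ i, α i) ≤ q →
    ∃ g : Euc d → ℝ, ContinuousOn g (closure Ω) ∧ Set.EqOn g (mpd α f) Ω

/-- The `C^q(Ω̄)` norm: `‖f‖_{C^q} = ∑_{|α| ≤ q} (1/α!) ‖∂^α f‖_∞`. -/
noncomputable def CqNorm {d : ℕ} (Ω : Set (Euc d)) (q : ℕ) (f : Euc d → ℝ) : ℝ :=
  ∑ α : Fin d → Fin (q + 1),
    if (∑ i, (α i : ℕ)) ≤ q then
      (∏ i, (Nat.factorial (α i) : ℝ))⁻¹ *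
        sSup ((fun x => |mpd (fun i => (α i : ℕ)) f x|) '' Ω)
    else 0

/-- The sup norm `‖f‖_∞ = max_{x ∈ Ω̄} |f x|`. -/
noncomputable def supNorm {d : ℕ} (Ω : Set (Euc d)) (f : Euc d → ℝ) : ℝ :=
  sSup ((fun x => |f x|) '' closure Ω)

/-- Mixed partial derivative `∂_x^α ∂_y^β` of a kernel. -/
noncomputable def mpd2 {d : ℕ} (α β : Fin d → ℕ) (k : Euc d → Euc d → ℝ) :
    Euc d → Euc d → ℝ :=
  fun x y => mpd α (fun x' => mpd β (k x') y) x

/-- Membership in `C^q(Ω̄ × Ω̄)` for kernels. -/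
def MemCq2 {d : ℕ} (Ω : Set (Euc d)) (q : ℕ) (k : Euc d → Euc d → ℝ) : Prop :=
  ContDiffOn ℝ (q : ℕ∞) (fun p : Euc d × Euc d => k p.1 p.2) (Ω ×ˢ Ω) ∧
  ContinuousOn (fun p : Euc d × Euc d => k p.1 p.2) (closure Ω ×ˢ closure Ω) ∧
  ∀ α β : Fin d → ℕ, (∑ i, α i) + (∑ i, β i) ≤ q →
    ∃ g : Euc d → Euc d → ℝ,
      ContinuousOn (fun p : Euc d × Euc d => g p.1 p.2) (closure Ω ×ˢ closure Ω) ∧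
      ∀ x ∈ Ω, ∀ y ∈ Ω, g x y = mpd2 α β k x y

/-! ### Iterated partial derivatives along lists of directions -/

/-- The iterated partial derivative of `f` along a list of coordinate directions, the head of the
list being differentiated first. -/
def lpd {d : ℕ} : List (Fin d) → (Euc d → ℝ) → (Euc d → ℝ)
  | [], f => f
  | i :: L, f => lpd L (pd i f)

/-- The directions `i ∈ l`, each repeated `α i` times, in the order in which `mpd α` applies them
when `l = List.finRange d`. -/
def expand {d : ℕ} (α : Fin d → ℕ) : List (Fin d) → List (Fin d)
  | [] => []
  | i :: l => expand α l ++ List.replicate (α i) i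

lemma lpd_append {d : ℕ} (L M : List (Fin d)) (f : Euc d → ℝ) :
    lpd (L ++ M) f = lpd M (lpd L f) := by
  induction L generalizing f with
  | nil => rfl
  | cons i L ih => exact ih _

lemma lpd_replicate {d : ℕ} (i : Fin d) (n : ℕ) (f : Euc d → ℝ) :
    lpd (List.replicate n i) f = (pd i)^[n] f := by
  induction n generalizing f with
  | zero => rfl
  | succ n ih => exact ih _

lemma mpd_eq_lpd {d : ℕ} (α : Fin d → ℕ) (f : Euc d → ℝ) :
    mpd α f = lpd (expand α (List.finRange d)) f := by
  unfold mpd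
  induction List.finRange d with
  | nil => rfl
  | cons i l ih => simp only [List.foldr_cons, Function.comp_apply, expand, lpd_append,
      lpd_replicate, ih]

lemma count_expand {d : ℕ} (α : Fin d → ℕ) (j : Fin d) :
    (expand α (List.finRange d)).count j = α j := by
  have h : ∀ l : List (Fin d), (expand α l).count j = l.count j * α j := by
    intro l
    induction l with
    | nil => simp [expand]
    | cons i l ih =>
      by_cases hij : i = j
      · subst hij
        simp [expand, ih, add_mul]
      · simp [expand, ih, List.count_replicate, hij]
  rw [h, List.count_eq_one_of_mem (List.nodup_finRange d) (List.mem_finRange j), one_mul]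

lemma sum_count {d : ℕ} (L : List (Fin d)) : ∑ i, L.count i = L.length := by
  simpa using Multiset.sum_count_eq_card (s := Finset.univ) (m := (L : Multiset (Fin d))) (by simp)

lemma length_expand {d : ℕ} (α : Fin d → ℕ) :
    (expand α (List.finRange d)).length = ∑ i, α i := by
  simp [← sum_count, count_expand]

lemma mpd_zero {d : ℕ} (f : Euc d → ℝ) : mpd 0 f = f := by
  rw [mpd_eq_lpd, List.length_eq_zero_iff.1 (by simp [length_expand] :
    (expand (0 : Fin d → ℕ) (List.finRange d)).length = 0)]
  rfl

section

variable {d : ℕ} {Ω : Set (Euc d)}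

lemma pd_congr (hΩ : IsOpen Ω) (i : Fin d) {f g : Euc d → ℝ} (h : EqOn f g Ω) :
    EqOn (pd i f) (pd i g) Ω := fun x hx => by
  simp only [pd, (h.eventuallyEq_of_mem (hΩ.mem_nhds hx)).fderiv_eq]

lemma lpd_congr (hΩ : IsOpen Ω) (L : List (Fin d)) {f g : Euc d → ℝ} (h : EqOn f g Ω) :
    EqOn (lpd L f) (lpd L g) Ω := by
  induction L generalizing f g with
  | nil => exact h
  | cons i L ih => exact ih (pd_congr hΩ i h)

lemma contDiffOn_pd (hΩ : IsOpen Ω) (i : Fin d) {n : ℕ} {f : Euc d → ℝ}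
    (hf : ContDiffOn ℝ ((n + 1 : ℕ) : WithTop ℕ∞) f Ω) : ContDiffOn ℝ (n : WithTop ℕ∞) (pd i f) Ω :=
  (hf.fderiv_of_isOpen hΩ (by norm_cast)).clm_apply contDiffOn_const

lemma pd_comm (hΩ : IsOpen Ω) (i j : Fin d) {f : Euc d → ℝ}
    (hf : ContDiffOn ℝ 2 f Ω) : EqOn (pd i (pd j f)) (pd j (pd i f)) Ω := fun x hx => by
  have hfx := hf.contDiffAt (hΩ.mem_nhds hx)
  have hd : DifferentiableAt ℝ (fderiv ℝ f) x :=
    (hfx.fderiv_right (m := 1) (by norm_num)).differentiableAt (by norm_num)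
  have key : ∀ u v : Euc d, fderiv ℝ (fun y => fderiv ℝ f y u) x v = fderiv ℝ (fderiv ℝ f) x v u := by
    intro u v
    have := (hd.hasFDerivAt.clm_apply (hasFDerivAt_const u x)).fderiv
    simp [this]
  change fderiv ℝ (fun y => fderiv ℝ f y _) x _ = fderiv ℝ (fun y => fderiv ℝ f y _) x _
  rw [key, key]
  exact (hfx.isSymmSndFDerivAt (by simp)) _ _

/-- For `C^n` functions the order of up to `n` partial differentiations is irrelevant (Schwarz). -/
lemma lpd_perm (hΩ : IsOpen Ω) {L M : List (Fin d)} (h : L.Perm M) {n : ℕ} (hn : L.length ≤ n)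
    {f : Euc d → ℝ} (hf : ContDiffOn ℝ (n : WithTop ℕ∞) f Ω) : EqOn (lpd L f) (lpd M f) Ω := by
  induction h generalizing n f with
  | nil => exact fun _ _ => rfl
  | cons i _ ih =>
    obtain ⟨m, rfl⟩ : ∃ m, n = m + 1 := ⟨n - 1, by grind⟩
    exact ih (by simpa using hn) (contDiffOn_pd hΩ i hf)
  | swap i j L =>
    refine lpd_congr hΩ L (pd_comm hΩ i j (hf.of_le ?_))
    have : 2 ≤ n := by grind
    exact_mod_cast this
  | trans h1 _ ih1 ih2 => exact (ih1 hn hf).trans (ih2 (h1.length_eq ▸ hn) hf)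

lemma pd_add (hΩ : IsOpen Ω) (i : Fin d) {f g : Euc d → ℝ} (hf : DifferentiableOn ℝ f Ω)
    (hg : DifferentiableOn ℝ g Ω) : EqOn (pd i (f + g)) (pd i f + pd i g) Ω := fun x hx => by
  have h := hΩ.mem_nhds hx
  simp [pd, fderiv_add (hf.differentiableAt h) (hg.differentiableAt h)]

lemma lpd_add (hΩ : IsOpen Ω) (L : List (Fin d)) {n : ℕ} (hn : L.length ≤ n) {f g : Euc d → ℝ}
    (hf : ContDiffOn ℝ (n : WithTop ℕ∞) f Ω) (hg : ContDiffOn ℝ (n : WithTop ℕ∞) g Ω) :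
    EqOn (lpd L (f + g)) (lpd L f + lpd L g) Ω := by
  induction L generalizing n f g with
  | nil => exact fun _ _ => rfl
  | cons i L ih =>
    obtain ⟨m, rfl⟩ : ∃ m, n = m + 1 := ⟨n - 1, by grind⟩
    have h0 : ((m + 1 : ℕ) : WithTop ℕ∞) ≠ 0 := by norm_cast
    exact (lpd_congr hΩ L (pd_add hΩ i (hf.differentiableOn h0) (hg.differentiableOn h0))).trans
      (ih (by simpa using hn) (contDiffOn_pd hΩ i hf) (contDiffOn_pd hΩ i hg))

lemma lpd_smul (L : List (Fin d)) (c : ℝ) (f : Euc d → ℝ) : lpd L (c • f) = c • lpd L f := by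
  induction L generalizing f with
  | nil => rfl
  | cons i L ih =>
    have : pd i (c • f) = c • pd i f := by
      ext x
      simp [pd, fderiv_const_smul_field]
    simp only [lpd, this, ih]

lemma fderiv_eq_sum_pd (f : Euc d → ℝ) (x : Euc d) :
    fderiv ℝ f x = ∑ i, pd i f x • (EuclideanSpace.proj i : Euc d →L[ℝ] ℝ) := by
  ext v
  conv_lhs => rw [← (EuclideanSpace.basisFun (Fin d) ℝ).sum_repr v]
  simp [pd, mul_comm]

/-- Completeness of `C^q`: if all iterated partial derivatives of order at most `q` of the `C^q`
functions `f n` converge uniformly on `Ω`, the limit `G []` of the functions is `C^q` and the limits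
`G L` are its partial derivatives. Induction on `q`: the limits of the first order partials form
the Fréchet derivative of `G []`, and the induction hypothesis applies to each sequence
`pd i (f n)`. -/
lemma limit_lpd (hΩ : IsOpen Ω) (q : ℕ) (f : ℕ → Euc d → ℝ) (G : List (Fin d) → Euc d → ℝ)
    (hf : ∀ n, ContDiffOn ℝ (q : WithTop ℕ∞) (f n) Ω)
    (hG : ∀ L : List (Fin d), L.length ≤ q →
      TendstoUniformlyOn (fun n => lpd L (f n)) (G L) atTop Ω) :
    ContDiffOn ℝ (q : WithTop ℕ∞) (G []) Ω ∧
      ∀ L : List (Fin d), L.length ≤ q → EqOn (lpd L (G [])) (G L) Ω := by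
  induction q generalizing f G with
  | zero =>
    refine ⟨?_, fun L hL => ?_⟩
    · refine contDiffOn_zero.2 ?_
      exact (hG [] le_rfl).continuousOn (Frequently.of_forall fun n => (hf n).continuousOn)
    · obtain rfl := List.length_eq_zero_iff.1 (Nat.le_zero.1 hL)
      exact fun _ _ => rfl
  | succ q ih =>
    have ih' := fun i : Fin d => ih (fun n => pd i (f n)) (fun L => G (i :: L))
      (fun n => contDiffOn_pd hΩ i (hf n)) (fun L hL => hG (i :: L) (by simpa using hL))
    have h0 : ((q + 1 : ℕ) : WithTop ℕ∞) ≠ 0 := by norm_cast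
    have hder : ∀ x ∈ Ω, HasFDerivAt (G [])
        (∑ i, G [i] x • (EuclideanSpace.proj i : Euc d →L[ℝ] ℝ)) x := by
      intro x hx
      refine hasFDerivAt_of_tendstoLocallyUniformlyOn (l := atTop) (f := f)
        (f' := fun n x => ∑ i, pd i (f n) x • (EuclideanSpace.proj i : Euc d →L[ℝ] ℝ))
        (g' := fun x => ∑ i, G [i] x • (EuclideanSpace.proj i : Euc d →L[ℝ] ℝ)) hΩ
        (TendstoUniformlyOn.tendstoLocallyUniformlyOn ?_) ?_
        (fun x hx => (hG [] (by simp)).tendsto_at hx) hx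
      · have hsmul : ∀ i : Fin d, TendstoUniformlyOn
            (fun n x => pd i (f n) x • (EuclideanSpace.proj i : Euc d →L[ℝ] ℝ))
            (fun x => G [i] x • (EuclideanSpace.proj i : Euc d →L[ℝ] ℝ)) atTop Ω := fun i =>
          ((ContinuousLinearMap.toSpanSingleton ℝ
            (EuclideanSpace.proj i : Euc d →L[ℝ] ℝ)).uniformContinuous).comp_tendstoUniformlyOn
            (hG [i] (by simp))
        have : ∀ s : Finset (Fin d), TendstoUniformlyOn
            (fun n x => ∑ i ∈ s, pd i (f n) x • (EuclideanSpace.proj i : Euc d →L[ℝ] ℝ))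
            (fun x => ∑ i ∈ s, G [i] x • (EuclideanSpace.proj i : Euc d →L[ℝ] ℝ)) atTop Ω := by
          classical
          intro s
          induction s using Finset.induction_on with
          | empty =>
            simp only [Finset.sum_empty]
            exact fun u hu => Eventually.of_forall fun n x _ => refl_mem_uniformity hu
          | insert i s hi ihs =>
            simp only [Finset.sum_insert hi]
            exact (hsmul i).add ihs
        exact this _
      · intro n x hx
        rw [← fderiv_eq_sum_pd]
        exact (((hf n).differentiableOn h0).differentiableAt (hΩ.mem_nhds hx)).hasFDerivAt
    have hpd : ∀ i, EqOn (pd i (G [])) (G [i]) Ω := by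
      intro i x hx
      simp only [pd, (hder x hx).fderiv]
      simp
    refine ⟨?_, fun L hL => ?_⟩
    · rw [show ((q + 1 : ℕ) : WithTop ℕ∞) = (q : WithTop ℕ∞) + 1 by norm_cast,
        contDiffOn_succ_iff_fderiv_of_isOpen hΩ]
      refine ⟨fun x hx => (hder x hx).differentiableAt.differentiableWithinAt, by simp, ?_⟩
      refine ContDiffOn.congr (f := fun x => ∑ i, G [i] x • (EuclideanSpace.proj i : Euc d →L[ℝ] ℝ))
        ?_ (fun x hx => (hder x hx).fderiv)
      exact ContDiffOn.sum fun i _ => (ih' i).1.smul contDiffOn_const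
    · cases L with
      | nil => exact fun _ _ => rfl
      | cons i L => exact (lpd_congr hΩ L (hpd i)).trans ((ih' i).2 L (by simpa using hL))

end

/-! ### Absolutely convex combinations -/

lemma AbsConvex.sum_smul_mem {V ι : Type*} [AddCommGroup V] [Module ℝ V] [Fintype ι]
    {H : Set V} (hH : AbsConvex ℝ H) (h0 : (0 : V) ∈ H) (c : ι → ℝ) (s : ι → V)
    (hs : ∀ i, s i ∈ H) (hc : ∑ i, |c i| ≤ 1) : ∑ i, c i • s i ∈ H := by
  have hσ0 : 0 ≤ ∑ i, |c i| := Finset.sum_nonneg fun i _ => abs_nonneg _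
  rcases hσ0.eq_or_lt with h | hσ
  · have hz : ∀ i, c i = 0 := fun i =>
      abs_eq_zero.1 ((Finset.sum_eq_zero_iff_of_nonneg fun i _ => abs_nonneg (c i)).1 h.symm i
        (Finset.mem_univ i))
    simpa [hz] using h0
  · have hz : ∀ i, (SignType.sign (c i) : ℝ) • s i ∈ H := by
      intro i
      rcases lt_trichotomy (c i) 0 with h | h | h
      · simpa [h] using hH.1.neg_mem_iff.2 (hs i)
      · simpa [h] using h0
      · simpa [h] using hs i
    have hmem : ∑ i, (|c i| / ∑ j, |c j|) • ((SignType.sign (c i) : ℝ) • s i) ∈ H :=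
      hH.2.sum_mem (fun i _ => by positivity)
        (by rw [← Finset.sum_div, div_self hσ.ne']) fun i _ => hz i
    have := hH.1.smul_mem (a := ∑ i, |c i|) (by rwa [Real.norm_of_nonneg hσ0]) hmem
    rw [Finset.smul_sum] at this
    convert this using 2 with i
    rw [smul_smul, mul_div_cancel₀ _ hσ.ne']
    rcases lt_trichotomy (c i) 0 with h | h | h
    · simp [h, abs_of_neg h]
    · simp [h]
    · simp [h, abs_of_pos h]

/-! ### Jets of `C^q` functions -/

section

variable {d : ℕ}

/-- Families of continuous functions on `closure Ω` indexed by lists of directions, with the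
product topology; the entry at `L` stands for the derivative `lpd L`. The index set is countable, so
the topology is first countable although lists of every length are allowed. -/
abbrev JetSpace (Ω : Set (Euc d)) := List (Fin d) → C(closure Ω, ℝ)

/-- `G` lists the continuous extensions to `closure Ω` of the partial derivatives of order at most
`q` of the `C^q` function `f`; entries at longer lists are unconstrained. -/
def IsJet {Ω : Set (Euc d)} (q : ℕ) (f : Euc d → ℝ) (G : JetSpace Ω) : Prop :=
  ContDiffOn ℝ (q : WithTop ℕ∞) f Ω ∧ ∀ L : List (Fin d), L.length ≤ q →
    ∀ x (hx : x ∈ Ω), lpd L f x = G L ⟨x, subset_closure hx⟩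

/-- The subspace of jets of functions that are `C^q` up to the boundary. -/
def jets {Ω : Set (Euc d)} (hΩ : IsOpen Ω) (q : ℕ) : Submodule ℝ (JetSpace Ω) where
  carrier := {G | ∃ f, IsJet q f G}
  zero_mem' := ⟨(0 : ℝ) • 0, contDiffOn_const.congr fun x _ => by simp; rfl, fun L _ x hx => by
    rw [lpd_smul]; simp⟩
  add_mem' := by
    rintro G G' ⟨f, hf, hf'⟩ ⟨g, hg, hg'⟩
    exact ⟨f + g, hf.add hg, fun L hL x hx => by
      rw [lpd_add hΩ L hL hf hg hx]; simp [hf' L hL x hx, hg' L hL x hx]⟩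
  smul_mem' := by
    rintro c G ⟨f, hf, hf'⟩
    exact ⟨c • f, contDiffOn_const.smul hf, fun L hL x hx => by
      rw [lpd_smul]; simp [hf' L hL x hx]⟩

/-- Extension by zero of a function on `closure Ω`. -/
def zeroExt {Ω : Set (Euc d)} (u : C(closure Ω, ℝ)) : Euc d → ℝ :=
  open Classical in fun x => if h : x ∈ closure Ω then u ⟨x, h⟩ else 0

variable {Ω : Set (Euc d)}

lemma zeroExt_apply (u : C(closure Ω, ℝ)) {x : Euc d} (hx : x ∈ closure Ω) :
    zeroExt u x = u ⟨x, hx⟩ := dif_pos hx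

lemma continuousOn_zeroExt (u : C(closure Ω, ℝ)) : ContinuousOn (zeroExt u) (closure Ω) := by
  rw [continuousOn_iff_continuous_domRestrict]
  convert u.continuous using 1
  ext x
  exact zeroExt_apply u x.2

lemma isJet_zeroExt (hΩ : IsOpen Ω) {q : ℕ} {G : JetSpace Ω} (hG : G ∈ jets hΩ q) :
    IsJet q (zeroExt (G [])) G := by
  obtain ⟨f, hf, hf'⟩ := hG
  have h : EqOn (zeroExt (G [])) f Ω := fun x hx => by
    rw [zeroExt_apply _ (subset_closure hx), ← hf' [] (by simp) x hx]; rfl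
  exact ⟨hf.congr h, fun L hL x hx => by rw [lpd_congr hΩ L h hx, hf' L hL x hx]⟩

/-- Jets form a closed subspace, since `C^q(Ω̄)` is complete. -/
lemma isClosed_jets [CompactSpace (closure Ω)] (hΩ : IsOpen Ω) (q : ℕ) :
    IsClosed (jets hΩ q : Set (JetSpace Ω)) := by
  refine isSeqClosed_iff_isClosed.1 fun F G hF hFG => ?_
  choose f hf using hF
  have := limit_lpd hΩ q f (fun L => zeroExt (G L)) (fun n => (hf n).1) fun L hL => by
    have h1 : Tendsto (fun n => F n L) atTop (𝓝 (G L)) := (tendsto_pi_nhds.1 hFG) L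
    rw [ContinuousMap.tendsto_iff_tendstoUniformly] at h1
    intro u hu
    filter_upwards [h1 u hu] with n hn x hx
    rw [(hf n).2 L hL x hx, zeroExt_apply _ (subset_closure hx)]
    exact hn _
  exact ⟨_, this.1, fun L hL x hx => by
    rw [this.2 L hL hx, zeroExt_apply _ (subset_closure hx)]⟩

/-- The sections `k(·, y)` have jets that depend continuously on `y ∈ closure Ω`. For `y ∈ Ω` this
is the hypothesis on `k`; for boundary points `y`, where the differentiability of `k(·, y)` is not
assumed, it follows because jets form a closed set and `Ω` is dense in its closure. -/
lemma exists_kernel_jet [CompactSpace (closure Ω)] (hΩ : IsOpen Ω) {q : ℕ} {k : Euc d → Euc d → ℝ}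
    (hk : MemCq2 Ω q k) : ∃ Φ : closure Ω → JetSpace Ω, Continuous Φ ∧
      (∀ y, Φ y ∈ jets hΩ q) ∧ ∀ x y : closure Ω, Φ y [] x = k x y := by
  obtain ⟨hk1, hk2, hk3⟩ := hk
  have hex : ∀ L : List (Fin d), ∃ u : C(closure Ω × closure Ω, ℝ),
      (L = [] → ∀ p, u p = k p.2 p.1) ∧ (L.length ≤ q → ∀ x (hx : x ∈ Ω) y (hy : y ∈ Ω),
        lpd L (fun x' => k x' y) x = u (⟨y, subset_closure hy⟩, ⟨x, subset_closure hx⟩)) := by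
    intro L
    have mk : ∀ g : Euc d → Euc d → ℝ,
        ContinuousOn (fun p : Euc d × Euc d => g p.1 p.2) (closure Ω ×ˢ closure Ω) →
        Continuous fun p : closure Ω × closure Ω => g p.2 p.1 := fun g hg =>
      hg.comp_continuous (f := fun p : closure Ω × closure Ω => ((p.2 : Euc d), (p.1 : Euc d)))
        (by fun_prop) fun p => ⟨p.2.2, p.1.2⟩
    by_cases hL0 : L = []
    · subst hL0
      exact ⟨⟨_, mk k hk2⟩, fun _ _ => rfl, fun _ _ _ _ _ => rfl⟩
    by_cases hL : L.length ≤ q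
    · obtain ⟨g, hg, hg'⟩ := hk3 (fun i => L.count i) 0 (by simpa [sum_count] using hL)
      refine ⟨⟨_, mk g hg⟩, fun h => absurd h hL0, fun _ x hx y hy => ?_⟩
      have hsec : ContDiffOn ℝ (q : WithTop ℕ∞) (fun x' => k x' y) Ω :=
        ContDiffOn.comp (g := fun p : Euc d × Euc d => k p.1 p.2) (f := fun x' => (x', y)) hk1
          (by fun_prop) fun x' hx' => ⟨hx', hy⟩
      simp only [ContinuousMap.coe_mk, hg' x hx y hy, mpd2, mpd_zero]
      rw [mpd_eq_lpd]
      refine lpd_perm hΩ (List.perm_iff_count.2 fun i => ?_) hL hsec hx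
      rw [count_expand]
    · exact ⟨0, fun h => absurd h hL0, fun h => absurd h hL⟩
  choose u hu0 hu using hex
  have hcont : Continuous fun (y : closure Ω) (L : List (Fin d)) => (u L).curry y :=
    continuous_pi fun L => (u L).curry.continuous
  refine ⟨_, hcont, fun y => ?_, fun x y => hu0 [] rfl (y, x)⟩
  have hdense : Dense {y : closure Ω | (y : Euc d) ∈ Ω} := by
    intro y
    rw [closure_subtype]
    convert y.2
    ext z
    simpa using fun hz => subset_closure hz
  refine (isClosed_jets hΩ q).closure_subset_iff.2 ?_
    (hcont.range_subset_closure_image_dense hdense ⟨y, rfl⟩)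
  rintro _ ⟨y, hy, rfl⟩
  refine ⟨fun x => k x y, ?_, fun L hL x hx => hu L hL x hx y hy⟩
  exact ContDiffOn.comp (g := fun p : Euc d × Euc d => k p.1 p.2) (f := fun x' => (x', (y : Euc d)))
    hk1 (by fun_prop) fun x' hx' => ⟨hx', hy⟩

lemma CqNorm_summand_nonneg (q : ℕ) (f : Euc d → ℝ) (α : Fin d → Fin (q + 1)) :
    0 ≤ if (∑ i, (α i : ℕ)) ≤ q then
      (∏ i, (Nat.factorial (α i) : ℝ))⁻¹ *
        sSup ((fun x => |mpd (fun i => (α i : ℕ)) f x|) '' Ω)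
      else 0 := by
  split_ifs
  · refine mul_nonneg (by positivity) (Real.sSup_nonneg ?_)
    rintro _ ⟨x, _, rfl⟩
    exact abs_nonneg _
  · exact le_rfl

lemma CqNorm_le {q : ℕ} [CompactSpace (closure Ω)] {f : Euc d → ℝ} {G : JetSpace Ω}
    (h : IsJet q f G) : CqNorm Ω q f ≤ ∑ α : Fin d → Fin (q + 1),
      ‖G (expand (fun i => (α i : ℕ)) (List.finRange d))‖ := by
  refine Finset.sum_le_sum fun α _ => ?_
  split_ifs with hα
  · have h1 : (∏ i, (Nat.factorial (α i) : ℝ))⁻¹ ≤ 1 :=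
      inv_le_one_of_one_le₀ (by
        exact_mod_cast Nat.one_le_iff_ne_zero.2
          (Finset.prod_ne_zero_iff.2 fun i _ => Nat.factorial_ne_zero _))
    have h2 : sSup ((fun x => |mpd (fun i => (α i : ℕ)) f x|) '' Ω) ≤
        ‖G (expand (fun i => (α i : ℕ)) (List.finRange d))‖ := by
      refine Real.sSup_le ?_ (norm_nonneg _)
      rintro _ ⟨x, hx, rfl⟩
      simp only [mpd_eq_lpd]
      rw [h.2 _ (by rwa [length_expand]) x hx]
      exact ContinuousMap.norm_coe_le_norm (G (expand (fun i => (α i : ℕ)) (List.finRange d))) _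
    refine (mul_le_mul h1 h2 (Real.sSup_nonneg ?_) zero_le_one).trans_eq (one_mul _)
    rintro _ ⟨x, _, rfl⟩
    exact abs_nonneg _
  · exact norm_nonneg _

lemma abs_le_CqNorm {q : ℕ} (hb : IsCompact (closure Ω)) {v : Euc d → ℝ} (hv : MemCq Ω q v)
    {x : Euc d} (hx : x ∈ closure Ω) : |v x| ≤ CqNorm Ω q v := by
  have hΩx : ∀ x ∈ Ω, |v x| ≤ CqNorm Ω q v := by
    intro x hx
    have hbdd : BddAbove ((fun x => |v x|) '' Ω) :=
      (hb.image_of_continuousOn hv.2.1.abs).bddAbove.mono (image_mono subset_closure)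
    have hsup : |v x| ≤ sSup ((fun x => |v x|) '' Ω) := le_csSup hbdd ⟨x, hx, rfl⟩
    refine hsup.trans ?_
    have := Finset.single_le_sum (f := fun α : Fin d → Fin (q + 1) =>
      if (∑ i, (α i : ℕ)) ≤ q then
      (∏ i, (Nat.factorial (α i) : ℝ))⁻¹ *
        sSup ((fun x => |mpd (fun i => (α i : ℕ)) v x|) '' Ω)
      else 0) (s := Finset.univ) (fun α _ => ?_) (Finset.mem_univ 0)
    · refine le_trans (le_of_eq ?_) this
      have h0 : mpd (fun _ : Fin d => 0) v = v := mpd_zero v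
      simp [h0]
    · exact CqNorm_summand_nonneg q v α
  exact ContinuousWithinAt.closure_le hx ((hv.2.1.abs x hx).mono subset_closure)
    continuousWithinAt_const hΩx

end

/-- **Collective compactness of the decoupled Nyström operators.**
The family `K_h⃗ v = Σ_i w_{h⃗,i} k(·, y_{h⃗,i}) Σ_j (R_h⃗)_{ij} v(x_{h⃗,j})`, indexed over all
`h⃗ = (h_X, h_Y)` with `h_X, h_Y > 0`, is collectively compact on `C^q(Ω̄)`: the set
`{ K_h⃗ v : h⃗ > 0, ‖v‖_{C^q} ≤ 1 }` is relatively compact in `C^q(Ω̄)`, which (since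
`C^q(Ω̄)` is a Banach space) we express sequentially: every sequence in this set has a
subsequence converging in the `C^q(Ω̄)` norm to an element of `C^q(Ω̄)`. -/
theorem decoupled_nystrom_collectively_compact
    (d q : ℕ)
    (Ω : Set (Euc d)) (hΩo : IsOpen Ω) (hΩb : Bornology.IsBounded Ω)
    (k : Euc d → Euc d → ℝ) (hk : MemCq2 Ω q k)
    -- the quadrature scheme: nodes `Y`, weights `w`, stable with constant `CQ`
    (NY : ℝ → ℕ) (Y : (h : ℝ) → Fin (NY h) → Euc d) (w : (h : ℝ) → Fin (NY h) → ℝ)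
    (hYmem : ∀ h > (0:ℝ), ∀ i, Y h i ∈ closure Ω)
    (CQ : ℝ) (hQstab : ∀ h > (0:ℝ), ∑ i, |w h i| ≤ CQ)
    -- the reconstruction scheme: nodes `X`, matrices `R`, stable with constant `CI`
    (MX : ℝ → ℕ) (X : (h : ℝ) → Fin (MX h) → Euc d)
    (hXmem : ∀ h > (0:ℝ), ∀ i, X h i ∈ closure Ω)
    (R : (hX : ℝ) → (hY : ℝ) → Matrix (Fin (NY hY)) (Fin (MX hX)) ℝ)
    (CI : ℝ) (hRstab : ∀ hX > (0:ℝ), ∀ hY > (0:ℝ), ∀ i, ∑ j, |R hX hY i j| ≤ CI) :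
    ∀ (hXs hYs : ℕ → ℝ) (v : ℕ → Euc d → ℝ),
      (∀ n, 0 < hXs n) → (∀ n, 0 < hYs n) →
      (∀ n, MemCq Ω q (v n)) → (∀ n, CqNorm Ω q (v n) ≤ 1) →
      ∃ g : Euc d → ℝ, MemCq Ω q g ∧ ∃ φ : ℕ → ℕ, StrictMono φ ∧
        Tendsto (fun n => CqNorm Ω q (fun x =>
            (∑ i, w (hYs (φ n)) i * k x (Y (hYs (φ n)) i) *
              (∑ j, R (hXs (φ n)) (hYs (φ n)) i j * v (φ n) (X (hXs (φ n)) j))) - g x))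
          atTop (𝓝 0) := by
  intro hXs hYs v hXpos hYpos hv hv1
  have hcpt : IsCompact (closure Ω) := hΩb.isCompact_closure
  have : CompactSpace (closure Ω) := isCompact_iff_compactSpace.1 hcpt
  obtain ⟨Φ, hΦc, hΦj, hΦ0⟩ := exists_kernel_jet hΩo hk
  -- `K_h⃗ v = ∑ i, c n i * k(·, y_i)` with `∑ i, |c n i| ≤ CQ * |CI|`; the summand `1` in `M` and
  -- the absolute value only serve to make `M` positive (`CI` may be negative if `Y` is empty).
  let c : (n : ℕ) → Fin (NY (hYs n)) → ℝ := fun n i =>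
    w (hYs n) i * ∑ j, R (hXs n) (hYs n) i j * v n (X (hXs n) j)
  let M : ℝ := CQ * |CI| + 1
  have hCQ : 0 ≤ CQ := (Finset.sum_nonneg fun _ _ => abs_nonneg _).trans (hQstab 1 one_pos)
  have hM : 0 < M := by positivity
  have hc : ∀ n, ∑ i, |c n i / M| ≤ 1 := by
    intro n
    have hrow : ∀ i, |∑ j, R (hXs n) (hYs n) i j * v n (X (hXs n) j)| ≤ |CI| := fun i =>
      calc |∑ j, R (hXs n) (hYs n) i j * v n (X (hXs n) j)|
          ≤ ∑ j, |R (hXs n) (hYs n) i j * v n (X (hXs n) j)| := Finset.abs_sum_le_sum_abs _ _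
        _ ≤ ∑ j, |R (hXs n) (hYs n) i j| := Finset.sum_le_sum fun j _ => by
            rw [abs_mul]
            exact mul_le_of_le_one_right (abs_nonneg _)
              ((abs_le_CqNorm hcpt (hv n) (hXmem _ (hXpos n) j)).trans (hv1 n))
        _ ≤ |CI| := (hRstab _ (hXpos n) _ (hYpos n) i).trans (le_abs_self _)
    simp only [abs_div, abs_of_pos hM, ← Finset.sum_div]
    rw [div_le_one hM]
    calc ∑ i, |c n i| ≤ ∑ i, |w (hYs n) i| * |CI| := Finset.sum_le_sum fun i _ => by
          rw [abs_mul]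
          exact mul_le_mul_of_nonneg_left (hrow i) (abs_nonneg _)
      _ ≤ CQ * |CI| := by
          rw [← Finset.sum_mul]
          exact mul_le_mul_of_nonneg_right (hQstab _ (hYpos n)) (abs_nonneg _)
      _ ≤ M := by simp [M]
  let T : ℕ → JetSpace Ω := fun n =>
    ∑ i, (c n i / M) • Φ ⟨Y (hYs n) i, hYmem _ (hYpos n) i⟩
  have hTj : ∀ n, T n ∈ jets hΩo q := fun n =>
    Submodule.sum_mem _ fun i _ => Submodule.smul_mem _ _ (hΦj _)
  -- `0` is adjoined because the hull of an empty set is empty, which matters when `Ω = ∅`.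
  let S : Set (JetSpace Ω) := insert 0 (range Φ)
  have hH : IsCompact (closedAbsConvexHull ℝ S) :=
    isCompact_closedAbsConvexHull_of_totallyBounded
      ((isCompact_range hΦc).insert 0).totallyBounded
  have hTH : ∀ n, T n ∈ closedAbsConvexHull ℝ S := fun n =>
    AbsConvex.sum_smul_mem absConvex_convexClosedHull
      (subset_closedAbsConvexHull (mem_insert _ _)) _ _
      (fun i => subset_closedAbsConvexHull (mem_insert_of_mem _ ⟨_, rfl⟩)) (hc n)
  obtain ⟨G, -, φ, hφ, hlim⟩ := hH.tendsto_subseq hTH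
  have hGj : G ∈ jets hΩo q :=
    (isClosed_jets hΩo q).mem_of_tendsto hlim (Eventually.of_forall fun n => hTj _)
  have hMGj : M • G ∈ jets hΩo q := Submodule.smul_mem _ _ hGj
  have hjet := isJet_zeroExt hΩo hMGj
  refine ⟨zeroExt ((M • G) []), ⟨hjet.1, continuousOn_zeroExt _, fun α hα => ?_⟩, φ, hφ, ?_⟩
  · refine ⟨_, continuousOn_zeroExt ((M • G) (expand α (List.finRange d))), fun x hx => ?_⟩
    rw [zeroExt_apply _ (subset_closure hx), mpd_eq_lpd, hjet.2 _ (by rwa [length_expand]) x hx]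
  · have hDj : ∀ n, IsJet q (fun x =>
            (∑ i, w (hYs (φ n)) i * k x (Y (hYs (φ n)) i) *
              (∑ j, R (hXs (φ n)) (hYs (φ n)) i j * v (φ n) (X (hXs (φ n)) j))) -
                zeroExt ((M • G) []) x) (M • T (φ n) - M • G) := by
      intro n
      have hj := isJet_zeroExt hΩo (Submodule.sub_mem _
        (Submodule.smul_mem _ M (hTj (φ n))) hMGj)
      have heq : EqOn (fun x =>
            (∑ i, w (hYs (φ n)) i * k x (Y (hYs (φ n)) i) *
              (∑ j, R (hXs (φ n)) (hYs (φ n)) i j * v (φ n) (X (hXs (φ n)) j))) -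
                zeroExt ((M • G) []) x) (zeroExt ((M • T (φ n) - M • G) [])) Ω := by
        intro x hx
        have hx' := subset_closure hx
        simp only [zeroExt_apply _ hx', T, Finset.smul_sum, smul_smul, mul_div_cancel₀ _ hM.ne']
        simp only [Pi.sub_apply, ContinuousMap.sub_apply, Finset.sum_apply, ContinuousMap.sum_apply,
          Pi.smul_apply, ContinuousMap.smul_apply, hΦ0, smul_eq_mul, c]
        congr 1
        exact Finset.sum_congr rfl fun i _ => by ring
      exact ⟨hj.1.congr heq, fun L hL x hx => by rw [lpd_congr hΩo L heq hx, hj.2 L hL x hx]⟩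
    refine squeeze_zero (fun n => ?_) (fun n => CqNorm_le (hDj n)) ?_
    · exact Finset.sum_nonneg fun α _ => CqNorm_summand_nonneg q _ α
    · have hD0 : Tendsto (fun n => M • T (φ n) - M • G) atTop (𝓝 0) := by
        simpa using (hlim.const_smul M).sub_const (M • G)
      rw [← Finset.sum_const_zero (s := (Finset.univ : Finset (Fin d → Fin (q + 1))))]
      exact tendsto_finsetSum _ fun α _ =>
        tendsto_zero_iff_norm_tendsto_zero.1 ((tendsto_pi_nhds.1 hD0) _)

end
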